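/- Let c ≥ 3 and b ≥ 1 be integers. Then λ(𝒯_{c,b}) = c + 1 if b = 1, and λ(𝒯_{c,b}) = c if b ≥ 2. -/

import Mathlib

open Finset Matrix

/-- The sign `[T : e]` of an edge `e` in a triangle `T`. -/
noncomputable def triSign (T e : Finset ℕ) : ℝ :=
  if e ⊆ T ∧ e.card = 2 ∧ T.card = 3 then
    if (T \ e).max = T.max ∨ (T \ e).min = T.min then 1 else -1
  else 0

/-- A triangle family: a nonempty finite set of 3-element subsets of ℕ. -/
def IsTriFam (F : Finset (Finset ℕ)) : Prop :=
  F.Nonempty ∧ ∀ T ∈ F, T.card = 3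

/-- The edges of the support graph of a triangle family. -/
def edgesOf (F : Finset (Finset ℕ)) : Finset (Finset ℕ) :=
  F.biUnion fun T => T.powersetCard 2

/-- The vertices of the support graph of a triangle family. -/
def vertsOf (F : Finset (Finset ℕ)) : Finset ℕ :=
  F.biUnion id

/-- The signed edge-triangle incidence matrix of a triangle family. -/
noncomputable def delta1 (F : Finset (Finset ℕ)) :
    Matrix {T // T ∈ F} {e // e ∈ edgesOf F} ℝ :=
  Matrix.of fun T e => triSign T.1 e.1

/-- The smallest positive eigenvalue of a matrix. -/
noncomputable def lambdaMinPos {m : Type*} [Fintype m] (M : Matrix m m ℝ) : ℝ :=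
  sInf {μ : ℝ | 0 < μ ∧ ∃ v : m → ℝ, v ≠ 0 ∧ M.mulVec v = μ • v}

/-- `λ(𝒯)`: the smallest positive eigenvalue of `δ₁(𝒯)ᵀ δ₁(𝒯)`. -/
noncomputable def lam (F : Finset (Finset ℕ)) : ℝ :=
  lambdaMinPos ((delta1 F)ᵀ * delta1 F)

/-- The neighborhood of `x` in the support graph `Γ₀(F)`. -/
def nbrs (F : Finset (Finset ℕ)) (x : ℕ) : Finset ℕ :=
  (vertsOf F).filter fun y => x ≠ y ∧ ∃ T ∈ F, x ∈ T ∧ y ∈ T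

/-- `φ(t)`: the maximum of `λ(𝒯)` over triangle families with `|𝒯| = t`. -/
noncomputable def phi (t : ℕ) : ℝ :=
  sSup {r : ℝ | ∃ F : Finset (Finset ℕ), IsTriFam F ∧ F.card = t ∧ lam F = r}

/-- `Λ(t) = max_{1 ≤ s ≤ t} φ(s)`. -/
noncomputable def Lam (t : ℕ) : ℝ :=
  sSup {r : ℝ | ∃ s : ℕ, 1 ≤ s ∧ s ≤ t ∧ phi s = r}

/-- `H(n) = min{ s ≥ 1 : φ(C(n,3)+s) > n - 1 }`. -/
noncomputable def Hfun (n : ℕ) : ℕ :=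
  sInf {s : ℕ | 1 ≤ s ∧ (n : ℝ) - 1 < phi (n.choose 3 + s)}

/-- The triangle family `𝒯_{c,b}`: all 3-cliques of `K_c ∨ (b isolated vertices)`. -/
def Tcb (c b : ℕ) : Finset (Finset ℕ) :=
  ((Finset.Icc 1 c).powersetCard 3) ∪
    (Finset.Icc (c+1) (c+b)).biUnion
      (fun i => ((Finset.Icc 1 c).powersetCard 2).image (fun p => insert i p))

/-!
Reading an edge vector as an antisymmetric function on ordered pairs of vertices turns `δ₁ᵀ δ₁` into
the up-Laplacian, which sums circulations around triangles and does not depend on the vertex order.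
Its values are divergence-free, so an eigenvector `f` with a positive eigenvalue is too. On a
divergence-free `f`, the up-Laplacian of `𝒯_{c,b}` multiplies the value at a core edge by `c + b`,
and at each core vertex `x` it acts on the `b` values `f w x`, with `w` outer, as `c I + J` for the
all-ones matrix `J`, whose eigenvalues are `c + b` and, when `b ≥ 2`, also `c`. Conversely, every
eigenvector of `c I + J` extends to one of the up-Laplacian by sending flow around the triangles
`1 → 2 → w → 1`.
-/

section Orientation

/-- The orientation of the ordered pair `(x, y)` relative to the order of `ℕ`: `1` if `x < y`, `-1`
if `y < x`, and `0` if `x = y`. -/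
noncomputable def orient (x y : ℕ) : ℝ :=
  if x < y then 1 else if y < x then -1 else 0

lemma orient_self (x : ℕ) : orient x x = 0 := by
  simp [orient]

lemma orient_swap (x y : ℕ) : orient y x = -orient x y := by
  unfold orient
  split_ifs <;> first | omega | norm_num

lemma orient_mul_self {x y : ℕ} (h : x ≠ y) : orient x y * orient x y = 1 := by
  unfold orient
  split_ifs <;> first | omega | norm_num

lemma triSign_pair {x y z : ℕ} (hxy : x ≠ y) (hxz : x ≠ z) (hyz : y ≠ z) :
    triSign {x, y, z} {x, y} = orient x z * orient y z := by
  have hsub : ({x, y} : Finset ℕ) ⊆ {x, y, z} := by grind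
  have hsdiff : ({x, y, z} : Finset ℕ) \ {x, y} = {z} := by grind
  have hmax : ({x, y, z} : Finset ℕ).max = WithBot.some (max x (max y z)) := by
    rw [max_insert, max_insert, max_singleton]; rfl
  have hmin : ({x, y, z} : Finset ℕ).min = WithTop.some (min x (min y z)) := by
    rw [min_insert, min_insert, min_singleton]; rfl
  rw [triSign, if_pos ⟨hsub, card_pair hxy, card_eq_three.mpr ⟨x, y, z, hxy, hxz, hyz, rfl⟩⟩,
    hsdiff, hmax, hmin, max_singleton, min_singleton]
  simp only [WithBot.coe_inj, WithTop.coe_inj]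
  unfold orient
  split_ifs <;> first | omega | norm_num

lemma triSign_eq_zero {T e : Finset ℕ} (h : ¬ e ⊆ T) : triSign T e = 0 :=
  if_neg fun hT => h hT.1

end Orientation

section Triples

variable {α : Type*} [DecidableEq α] {x y z : α}

lemma ne_of_card_triple_eq_three (h : #{x, y, z} = 3) : x ≠ y ∧ x ≠ z ∧ y ≠ z := by
  refine ⟨?_, ?_, ?_⟩ <;> rintro rfl <;> grind [Finset.card_le_two]

lemma sum_powersetCard_two_triple {M : Type*} [AddCommMonoid M] (hxy : x ≠ y) (hxz : x ≠ z)
    (hyz : y ≠ z) (g : Finset α → M) :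
    ∑ e ∈ powersetCard 2 {x, y, z}, g e = g {x, y} + g {x, z} + g {y, z} := by
  have hpairs : powersetCard 2 {x, y, z} = {{x, y}, {x, z}, {y, z}} := by
    have hyz_self : powersetCard 2 {y, z} = {{y, z}} := by rw [← card_pair hyz, powersetCard_self]
    rw [powersetCard_succ_insert (by grind), hyz_self, powersetCard_one]
    ext e
    simp only [mem_union, mem_image, mem_map, mem_insert, mem_singleton,
      Function.Embedding.coeFn_mk]
    grind
  have hy : y ∉ ({x, z} : Finset α) := by grind
  have hx : x ∉ ({y, z} : Finset α) := by grind
  rw [hpairs, sum_insert, sum_pair, add_assoc]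
  · exact fun h => hx (h ▸ mem_insert_self x {z})
  · rw [mem_insert, mem_singleton, not_or]
    exact ⟨fun h => hy (h ▸ by simp), fun h => hx (h ▸ mem_insert_self x {y})⟩

end Triples

section Cochains

variable {F : Finset (Finset ℕ)}

lemma pair_mem_edgesOf_iff {x y : ℕ} :
    {x, y} ∈ edgesOf F ↔ x ≠ y ∧ ∃ T ∈ F, x ∈ T ∧ y ∈ T := by
  simp only [edgesOf, mem_biUnion, mem_powersetCard, insert_subset_iff, singleton_subset_iff,
    card_pair_eq_two_iff]
  tauto

lemma card_of_mem_edgesOf {e : Finset ℕ} (he : e ∈ edgesOf F) : #e = 2 := by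
  obtain ⟨T, -, heT⟩ := mem_biUnion.mp he
  exact (mem_powersetCard.mp heT).2

variable (F) in
/-- The simplicial 1-cochains of the support graph of `F`, as antisymmetric functions of ordered
pairs of vertices that vanish off the edges. -/
def cochains : Submodule ℝ (ℕ → ℕ → ℝ) where
  carrier := {f | (∀ x y, f y x = -f x y) ∧ ∀ x y, {x, y} ∉ edgesOf F → f x y = 0}
  add_mem' := fun hf hg =>
    ⟨fun x y => by simp only [Pi.add_apply, hf.1 x y, hg.1 x y]; ring,
      fun x y h => by simp [hf.2 x y h, hg.2 x y h]⟩
  zero_mem' := by simp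
  smul_mem' := fun r f hf =>
    ⟨fun x y => by simp [hf.1 x y], fun x y h => by simp [hf.2 x y h]⟩

variable (F) in
/-- The cochain of an edge vector, whose value at an edge is read along the increasing
orientation. It turns the signs of `delta1` into the antisymmetry of cochains. -/
noncomputable def toCochain : ({e // e ∈ edgesOf F} → ℝ) →ₗ[ℝ] (ℕ → ℕ → ℝ) where
  toFun v x y := if h : {x, y} ∈ edgesOf F then orient x y * v ⟨{x, y}, h⟩ else 0
  map_add' v w := by
    ext x y
    by_cases h : {x, y} ∈ edgesOf F <;> simp [h, mul_add]
  map_smul' r v := by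
    ext x y
    by_cases h : {x, y} ∈ edgesOf F <;> simp [h, mul_left_comm]

lemma toCochain_of_mem (v : {e // e ∈ edgesOf F} → ℝ) {x y : ℕ} (h : {x, y} ∈ edgesOf F) :
    toCochain F v x y = orient x y * v ⟨{x, y}, h⟩ :=
  dif_pos h

lemma toCochain_of_notMem (v : {e // e ∈ edgesOf F} → ℝ) {x y : ℕ} (h : {x, y} ∉ edgesOf F) :
    toCochain F v x y = 0 :=
  dif_neg h

lemma apply_eq_orient_mul_toCochain (v : {e // e ∈ edgesOf F} → ℝ) {x y : ℕ}
    (h : {x, y} ∈ edgesOf F) : v ⟨{x, y}, h⟩ = orient x y * toCochain F v x y := by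
  rw [toCochain_of_mem v h, ← mul_assoc, orient_mul_self (pair_mem_edgesOf_iff.mp h).1, one_mul]

lemma toCochain_injective : Function.Injective (toCochain F) := by
  intro v w hvw
  ext ⟨e, he⟩
  obtain ⟨x, y, -, rfl⟩ := Finset.card_eq_two.mp (card_of_mem_edgesOf he)
  rw [apply_eq_orient_mul_toCochain v, apply_eq_orient_mul_toCochain w, hvw]

lemma toCochain_mem_cochains (v : {e // e ∈ edgesOf F} → ℝ) : toCochain F v ∈ cochains F := by
  refine ⟨fun x y => ?_, fun x y => toCochain_of_notMem v⟩
  by_cases h : {x, y} ∈ edgesOf F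
  · simp only [toCochain_of_mem v h, toCochain_of_mem v (pair_comm x y ▸ h), pair_comm y x,
      orient_swap x y, neg_mul]
  · rw [toCochain_of_notMem v h, toCochain_of_notMem v (pair_comm x y ▸ h), neg_zero]

lemma range_toCochain : (toCochain F).range = cochains F := by
  refine le_antisymm (LinearMap.range_le_iff_comap.mpr (eq_top_iff.mpr fun v _ =>
    toCochain_mem_cochains v)) fun f hf => ?_
  refine ⟨fun e => (∑ x ∈ e.1, ∑ y ∈ e.1, orient x y * f x y) / 2, ?_⟩
  ext x y
  by_cases h : {x, y} ∈ edgesOf F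
  · have hxy := (pair_mem_edgesOf_iff.mp h).1
    rw [toCochain_of_mem _ h]
    simp only [sum_pair hxy, orient_self, orient_swap x y, hf.1 x y]
    linear_combination f x y * orient_mul_self hxy
  · rw [toCochain_of_notMem _ h, hf.2 x y h]

end Cochains

section UpLaplacian

/-- The up-Laplacian of `F` on functions of ordered pairs of vertices: at `(x, y)` it sums the
circulation of `f` around the triangles of `F` through `x` and `y`. -/
noncomputable def upLaplacian (F : Finset (Finset ℕ)) (f : ℕ → ℕ → ℝ) (x y : ℕ) : ℝ :=
  ∑ z ∈ vertsOf F, if {x, y, z} ∈ F then f x y + f y z + f z x else 0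

variable {F : Finset (Finset ℕ)}

lemma sum_triSign_mul (v : {e // e ∈ edgesOf F} → ℝ) {x y z : ℕ} (hT : {x, y, z} ∈ F)
    (hxy : x ≠ y) (hxz : x ≠ z) (hyz : y ≠ z) :
    ∑ e, triSign {x, y, z} e.1 * v e = orient x y * orient x z * orient y z *
      (toCochain F v x y + toCochain F v y z + toCochain F v z x) := by
  let g (e : Finset ℕ) : ℝ := if h : e ∈ edgesOf F then triSign {x, y, z} e * v ⟨e, h⟩ else 0
  have hg {a b : ℕ} (h : {a, b} ∈ edgesOf F) :
      g {a, b} = triSign {x, y, z} {a, b} * (orient a b * toCochain F v a b) := by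
    rw [← apply_eq_orient_mul_toCochain v h]
    exact dif_pos h
  have hsupp : ∑ e ∈ edgesOf F, g e = ∑ e ∈ powersetCard 2 {x, y, z}, g e := by
    refine (sum_subset (fun e he => mem_biUnion.mpr ⟨_, hT, he⟩) fun e he hn => ?_).symm
    have hsub : ¬ e ⊆ {x, y, z} := fun h => hn (mem_powersetCard.mpr ⟨h, card_of_mem_edgesOf he⟩)
    simp [g, triSign_eq_zero hsub]
  have hxz_sign : triSign {x, y, z} {x, z} = orient x y * orient z y :=
    pair_comm y z ▸ triSign_pair hxz hxy hyz.symm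
  have hyz_sign : triSign {x, y, z} {y, z} = orient y x * orient z x := by
    rw [← triSign_pair hyz hxy.symm hxz.symm, pair_comm z x, Finset.insert_comm y x]
  calc ∑ e, triSign {x, y, z} e.1 * v e
      = ∑ e ∈ edgesOf F, g e := by simp [← sum_coe_sort (edgesOf F), g]
    _ = g {x, y} + g {x, z} + g {y, z} := by
      rw [hsupp, sum_powersetCard_two_triple hxy hxz hyz]
    _ = _ := by
      rw [hg (pair_mem_edgesOf_iff.mpr ⟨hxy, _, hT, by simp⟩),
        hg (pair_mem_edgesOf_iff.mpr ⟨hxz, _, hT, by simp⟩),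
        hg (pair_mem_edgesOf_iff.mpr ⟨hyz, _, hT, by simp⟩), triSign_pair hxy hxz hyz,
        hxz_sign, hyz_sign, (toCochain_mem_cochains v).1 x z, orient_swap x y, orient_swap x z,
        orient_swap y z]
      ring

lemma sum_filter_pair_subset {M : Type*} [AddCommMonoid M] (hF : ∀ T ∈ F, #T = 3) {x y : ℕ}
    (hxy : x ≠ y) (g : Finset ℕ → M) :
    ∑ T ∈ F with {x, y} ⊆ T, g T = ∑ z ∈ vertsOf F with {x, y, z} ∈ F, g {x, y, z} := by
  symm
  refine sum_bij (fun z _ => {x, y, z}) ?_ ?_ ?_ fun _ _ => rfl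
  · intro z hz
    exact mem_filter.mpr ⟨(mem_filter.mp hz).2, by grind⟩
  · intro z hz w _ h
    obtain ⟨-, hxz, hyz⟩ := ne_of_card_triple_eq_three (hF _ (mem_filter.mp hz).2)
    have hzw : z ∈ ({x, y, w} : Finset ℕ) := h ▸ by simp
    grind
  · intro T hT
    obtain ⟨hTF, hsub⟩ := mem_filter.mp hT
    obtain ⟨z, hz⟩ : ∃ z, T \ {x, y} = {z} := by
      rw [← card_eq_one, card_sdiff_of_subset hsub, hF T hTF, card_pair hxy]
    have hTz : {x, y, z} = T := by
      rw [← sdiff_union_of_subset hsub, hz]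
      grind
    subst hTz
    exact ⟨z, mem_filter.mpr ⟨mem_biUnion.mpr ⟨_, hTF, by simp⟩, hTF⟩, rfl⟩

lemma upLaplacian_eq_zero (hF : ∀ T ∈ F, #T = 3) (f : ℕ → ℕ → ℝ) {x y : ℕ}
    (h : {x, y} ∉ edgesOf F) : upLaplacian F f x y = 0 := by
  refine sum_eq_zero fun z _ => if_neg fun hT => h ?_
  exact pair_mem_edgesOf_iff.mpr
    ⟨(ne_of_card_triple_eq_three (hF _ hT)).1, _, hT, by simp⟩

lemma toCochain_mulVec (hF : ∀ T ∈ F, #T = 3) (v : {e // e ∈ edgesOf F} → ℝ) :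
    toCochain F (((delta1 F)ᵀ * delta1 F) *ᵥ v) = upLaplacian F (toCochain F v) := by
  ext x y
  by_cases hxy : {x, y} ∈ edgesOf F
  swap
  · rw [toCochain_of_notMem _ hxy, upLaplacian_eq_zero hF _ hxy]
  have hne := (pair_mem_edgesOf_iff.mp hxy).1
  let curl (T : Finset ℕ) : ℝ := ∑ e, triSign T e.1 * v e
  calc toCochain F (((delta1 F)ᵀ * delta1 F) *ᵥ v) x y
      = orient x y * ∑ T ∈ F, triSign T {x, y} * curl T := by
        rw [toCochain_of_mem _ hxy, ← mulVec_mulVec, ← sum_coe_sort F]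
        rfl
    _ = orient x y * ∑ T ∈ F with {x, y} ⊆ T, triSign T {x, y} * curl T := by
        rw [sum_filter_of_ne]
        intro T _ h
        by_contra hsub
        exact h (by rw [triSign_eq_zero hsub, zero_mul])
    _ = orient x y * ∑ z ∈ vertsOf F with {x, y, z} ∈ F,
          triSign {x, y, z} {x, y} * curl {x, y, z} := by
        rw [sum_filter_pair_subset hF hne]
    _ = upLaplacian F (toCochain F v) x y := by
        rw [upLaplacian, ← sum_filter, mul_sum]
        refine sum_congr rfl fun z hz => ?_
        have hT := (mem_filter.mp hz).2
        obtain ⟨-, hxz, hyz⟩ := ne_of_card_triple_eq_three (hF _ hT)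
        simp only [curl, triSign_pair hne hxz hyz, sum_triSign_mul v hT hne hxz hyz]
        linear_combination (toCochain F v x y + toCochain F v y z + toCochain F v z x) *
          (orient x z * orient x z * orient y z * orient y z * orient_mul_self hne
            + orient y z * orient y z * orient_mul_self hxz + orient_mul_self hyz)

lemma upLaplacian_mem_cochains (hF : ∀ T ∈ F, #T = 3) {f : ℕ → ℕ → ℝ} (hf : f ∈ cochains F) :
    upLaplacian F f ∈ cochains F := by
  obtain ⟨v, rfl⟩ := range_toCochain.ge hf
  exact toCochain_mulVec hF v ▸ toCochain_mem_cochains _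

/-- The set of positive eigenvalues of a square matrix, of which `lambdaMinPos` is the infimum. -/
def posEigenvalues {m : Type*} [Fintype m] (M : Matrix m m ℝ) : Set ℝ :=
  {μ | 0 < μ ∧ ∃ v : m → ℝ, v ≠ 0 ∧ M *ᵥ v = μ • v}

lemma mem_posEigenvalues_iff_exists_cochain (hF : ∀ T ∈ F, #T = 3) {μ : ℝ} :
    μ ∈ posEigenvalues ((delta1 F)ᵀ * delta1 F) ↔
      0 < μ ∧ ∃ f ∈ cochains F, f ≠ 0 ∧ upLaplacian F f = μ • f := by
  simp only [← range_toCochain, LinearMap.mem_range, exists_exists_eq_and,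
    ← toCochain_mulVec hF, ← map_smul, toCochain_injective.eq_iff,
    map_ne_zero_iff _ toCochain_injective]
  rfl

lemma sum_upLaplacian (f : ℕ → ℕ → ℝ) (hf : ∀ x y, f y x = -f x y) (x : ℕ) :
    ∑ y ∈ vertsOf F, upLaplacian F f x y = 0 := by
  have hneg : ∑ y ∈ vertsOf F, upLaplacian F f x y = -∑ y ∈ vertsOf F, upLaplacian F f x y := by
    unfold upLaplacian
    conv_lhs => rw [sum_comm]
    simp only [← sum_neg_distrib]
    refine sum_congr rfl fun y _ => sum_congr rfl fun z _ => ?_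
    rw [pair_comm z y]
    split_ifs
    · rw [hf x z, hf y z, hf x y]; ring
    · rw [neg_zero]
  linarith

lemma sum_eq_zero_of_upLaplacian_eq_smul {f : ℕ → ℕ → ℝ} (hf : ∀ x y, f y x = -f x y) {μ : ℝ}
    (hμ : μ ≠ 0) (h : upLaplacian F f = μ • f) (x : ℕ) : ∑ y ∈ vertsOf F, f x y = 0 := by
  have hsum := sum_upLaplacian (F := F) f hf x
  simp only [h, Pi.smul_apply, smul_eq_mul, ← mul_sum] at hsum
  exact (mul_eq_zero.mp hsum).resolve_left hμ

end UpLaplacian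

section JoinGraph

/-- The graph `G_{c,b}`, placed on the vertices `1, …, c + b` of `ℕ`; the other natural numbers are
isolated. -/
def joinGraph (c b : ℕ) : SimpleGraph ℕ where
  Adj x y := x ≠ y ∧ (x ∈ Icc 1 (c + b) ∧ y ∈ Icc 1 (c + b)) ∧ (x ≤ c ∨ y ≤ c)
  symm := ⟨fun _ _ h => ⟨h.1.symm, h.2.1.symm, h.2.2.symm⟩⟩
  loopless := ⟨fun _ h => h.1 rfl⟩

variable {c b : ℕ}

lemma joinGraph_adj {x y : ℕ} : (joinGraph c b).Adj x y ↔
    x ≠ y ∧ (x ∈ Icc 1 (c + b) ∧ y ∈ Icc 1 (c + b)) ∧ (x ≤ c ∨ y ≤ c) :=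
  Iff.rfl

lemma mem_Tcb_iff_isNClique {T : Finset ℕ} : T ∈ Tcb c b ↔ (joinGraph c b).IsNClique 3 T := by
  simp only [Tcb, mem_union, mem_biUnion, mem_image, mem_powersetCard, SimpleGraph.is3Clique_iff,
    joinGraph_adj, mem_Icc]
  constructor
  · rintro (⟨hT, hcard⟩ | ⟨i, hi, p, ⟨hp, hcard⟩, rfl⟩)
    · obtain ⟨x, y, z, hxy, hxz, hyz, rfl⟩ := card_eq_three.mp hcard
      simp only [insert_subset_iff, singleton_subset_iff, mem_Icc] at hT
      exact ⟨x, y, z, by omega, by omega, by omega, rfl⟩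
    · obtain ⟨x, y, hxy, rfl⟩ := Finset.card_eq_two.mp hcard
      simp only [insert_subset_iff, singleton_subset_iff, mem_Icc] at hp
      exact ⟨i, x, y, by grind⟩
  · rintro ⟨x, y, z, hxy, hxz, hyz, rfl⟩
    have houter {i x y : ℕ} (hi : c < i) (hib : i ≤ c + b) (hx : x ∈ Icc 1 c) (hy : y ∈ Icc 1 c)
        (hne : x ≠ y) : ∃ j, (c + 1 ≤ j ∧ j ≤ c + b) ∧
          ∃ p, (p ⊆ Icc 1 c ∧ #p = 2) ∧ insert j p = {i, x, y} :=
      ⟨i, ⟨hi, hib⟩, {x, y}, ⟨by grind, card_pair hne⟩, rfl⟩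
    by_cases hcore : x ≤ c ∧ y ≤ c ∧ z ≤ c
    · exact .inl ⟨by grind, card_eq_three.mpr ⟨x, y, z, hxy.1, hxz.1, hyz.1, rfl⟩⟩
    · right
      obtain hx | hy | hz : c < x ∨ c < y ∨ c < z := by omega
      · exact houter hx (by grind) (by grind) (by grind) hyz.1
      · rw [Finset.insert_comm]
        exact houter hy (by grind) (by grind) (by grind) hxz.1
      · rw [pair_comm y, Finset.insert_comm]
        exact houter hz (by grind) (by grind) (by grind) hxy.1

lemma triple_mem_Tcb_iff {x y z : ℕ} : {x, y, z} ∈ Tcb c b ↔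
    (joinGraph c b).Adj x y ∧ (joinGraph c b).Adj x z ∧ (joinGraph c b).Adj y z := by
  rw [mem_Tcb_iff_isNClique, SimpleGraph.is3Clique_triple_iff]

lemma card_of_mem_Tcb : ∀ T ∈ Tcb c b, #T = 3 :=
  fun _ hT => (mem_Tcb_iff_isNClique.mp hT).card_eq

lemma pair_mem_edgesOf_Tcb_iff (hc : 2 ≤ c) (hb : 1 ≤ b) {x y : ℕ} :
    {x, y} ∈ edgesOf (Tcb c b) ↔ (joinGraph c b).Adj x y := by
  rw [pair_mem_edgesOf_iff]
  constructor
  · rintro ⟨hxy, T, hT, hx, hy⟩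
    exact (mem_Tcb_iff_isNClique.mp hT).isClique hx hy hxy
  · intro h
    obtain ⟨z, hxz, hyz⟩ : ∃ z, (joinGraph c b).Adj x z ∧ (joinGraph c b).Adj y z := by
      simp only [joinGraph_adj, mem_Icc] at h ⊢
      by_cases hcore : x ≤ c ∧ y ≤ c
      · exact ⟨c + 1, by omega⟩
      · by_cases hone : x = 1 ∨ y = 1
        · exact ⟨2, by omega⟩
        · exact ⟨1, by omega⟩
    exact ⟨h.1, {x, y, z}, triple_mem_Tcb_iff.mpr ⟨h, hxz, hyz⟩, by simp⟩

lemma vertsOf_Tcb (hc : 2 ≤ c) (hb : 1 ≤ b) : vertsOf (Tcb c b) = Icc 1 (c + b) := by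
  ext x
  simp only [vertsOf, mem_biUnion, id]
  constructor
  · rintro ⟨T, hT, hx⟩
    obtain ⟨y, hy, hyx⟩ := exists_mem_ne (by rw [card_of_mem_Tcb T hT]; norm_num) x
    exact ((mem_Tcb_iff_isNClique.mp hT).isClique hy hx hyx).2.1.2
  · intro hx
    obtain ⟨y, hxy⟩ : ∃ y, (joinGraph c b).Adj x y := by
      simp only [joinGraph_adj, mem_Icc] at hx ⊢
      by_cases hone : x = 1
      · exact ⟨2, by omega⟩
      · exact ⟨1, by omega⟩
    obtain ⟨-, T, hT, hxT, -⟩ :=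
      pair_mem_edgesOf_iff.mp ((pair_mem_edgesOf_Tcb_iff hc hb).mpr hxy)
    exact ⟨T, hT, hxT⟩

lemma sum_Icc_add {M : Type*} [AddCommMonoid M] (g : ℕ → M) :
    ∑ z ∈ Icc 1 (c + b), g z = ∑ z ∈ Icc 1 c, g z + ∑ z ∈ Icc (c + 1) (c + b), g z := by
  rw [← sum_union]
  · congr 1
    grind
  · exact disjoint_left.mpr (by grind)

end JoinGraph

section CochainsTcb

variable {c b : ℕ} {f : ℕ → ℕ → ℝ}

lemma mem_cochains_Tcb_iff (hc : 2 ≤ c) (hb : 1 ≤ b) : f ∈ cochains (Tcb c b) ↔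
    (∀ x y, f y x = -f x y) ∧ ∀ x y, ¬ (joinGraph c b).Adj x y → f x y = 0 := by
  simp only [← pair_mem_edgesOf_Tcb_iff hc hb]
  rfl

lemma eq_of_mem_cochains_Tcb (hc : 2 ≤ c) (hb : 1 ≤ b) {g : ℕ → ℕ → ℝ}
    (hf : f ∈ cochains (Tcb c b)) (hg : g ∈ cochains (Tcb c b))
    (hcore : ∀ x ∈ Icc 1 c, ∀ y ∈ Icc 1 c, f x y = g x y)
    (houter : ∀ w ∈ Icc (c + 1) (c + b), ∀ x ∈ Icc 1 c, f w x = g w x) : f = g := by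
  rw [mem_cochains_Tcb_iff hc hb] at hf hg
  ext x y
  by_cases h : (joinGraph c b).Adj x y
  · simp only [joinGraph_adj, mem_Icc] at h
    by_cases hx : x ≤ c
    · by_cases hy : y ≤ c
      · exact hcore x (by grind) y (by grind)
      · rw [hf.1 y x, hg.1 y x, houter y (by grind) x (by grind)]
    · exact houter x (by grind) y (by grind)
  · rw [hf.2 x y h, hg.2 x y h]

lemma upLaplacian_Tcb_core (hc : 2 ≤ c) (hb : 1 ≤ b) (hf : f ∈ cochains (Tcb c b))
    (hdiv : ∀ x, ∑ y ∈ Icc 1 (c + b), f x y = 0) {x y : ℕ} (hx : x ∈ Icc 1 c)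
    (hy : y ∈ Icc 1 c) : upLaplacian (Tcb c b) f x y = (c + b) * f x y := by
  have hanti := hf.1
  have hself (x : ℕ) : f x x = 0 := by linarith [hanti x x]
  obtain rfl | hxy := eq_or_ne x y
  · rw [hself, mul_zero]
    linarith [(upLaplacian_mem_cochains card_of_mem_Tcb hf).1 x x]
  have hterm : ∀ z ∈ Icc 1 (c + b), (if {x, y, z} ∈ Tcb c b then f x y + f y z + f z x else 0) =
      f x y + f y z - f x z := by
    intro z hz
    split_ifs with h
    · rw [hanti x z]; ring
    · obtain rfl | rfl : z = x ∨ z = y := by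
        simp only [triple_mem_Tcb_iff, joinGraph_adj] at h
        grind
      · rw [hself, hanti z y]; ring
      · rw [hself]; ring
  rw [upLaplacian, vertsOf_Tcb hc hb, sum_congr rfl hterm, sum_sub_distrib, sum_add_distrib,
    hdiv, hdiv]
  simp

lemma upLaplacian_Tcb_outer (hc : 2 ≤ c) (hb : 1 ≤ b) (hf : f ∈ cochains (Tcb c b))
    (hdiv : ∀ x, ∑ y ∈ Icc 1 (c + b), f x y = 0) {w x : ℕ} (hw : w ∈ Icc (c + 1) (c + b))
    (hx : x ∈ Icc 1 c) : upLaplacian (Tcb c b) f w x =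
      c * f w x + ∑ u ∈ Icc (c + 1) (c + b), f u x := by
  obtain ⟨hanti, hsupp⟩ := (mem_cochains_Tcb_iff hc hb).mp hf
  have hterm_core : ∀ z ∈ Icc 1 c, (if {w, x, z} ∈ Tcb c b then f w x + f x z + f z w else 0) =
      f w x + f x z - f w z := by
    intro z hz
    split_ifs with h
    · rw [hanti w z]; ring
    · obtain rfl : z = x := by
        simp only [triple_mem_Tcb_iff, joinGraph_adj] at h
        grind
      linarith [hanti z z]
  have hterm_outer : ∀ z ∈ Icc (c + 1) (c + b),
      (if {w, x, z} ∈ Tcb c b then f w x + f x z + f z w else 0) = 0 := by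
    intro z hz
    rw [if_neg]
    simp only [triple_mem_Tcb_iff, joinGraph_adj]
    grind
  have hdiv_w : ∑ z ∈ Icc 1 c, f w z = 0 := by
    have houter : ∀ z ∈ Icc (c + 1) (c + b), f w z = 0 :=
      fun z hz => hsupp w z (by rw [joinGraph_adj]; grind)
    simpa only [sum_Icc_add, sum_eq_zero houter, add_zero] using hdiv w
  have hdiv_x : ∑ z ∈ Icc 1 c, f x z = ∑ u ∈ Icc (c + 1) (c + b), f u x := by
    simp only [hanti x, sum_neg_distrib]
    linarith [hdiv x, sum_Icc_add (c := c) (b := b) (f x)]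
  rw [upLaplacian, vertsOf_Tcb hc hb, sum_Icc_add, sum_congr rfl hterm_core,
    sum_eq_zero hterm_outer, sum_sub_distrib, sum_add_distrib, hdiv_w, hdiv_x]
  simp

lemma upLaplacian_Tcb_eq_smul_iff (hc : 2 ≤ c) (hb : 1 ≤ b) (hf : f ∈ cochains (Tcb c b))
    (hdiv : ∀ x, ∑ y ∈ Icc 1 (c + b), f x y = 0) {μ : ℝ} : upLaplacian (Tcb c b) f = μ • f ↔
      (∀ x ∈ Icc 1 c, ∀ y ∈ Icc 1 c, (c + b) * f x y = μ * f x y) ∧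
      ∀ w ∈ Icc (c + 1) (c + b), ∀ x ∈ Icc 1 c,
        c * f w x + ∑ u ∈ Icc (c + 1) (c + b), f u x = μ * f w x := by
  constructor
  · refine fun h => ⟨fun x hx y hy => ?_, fun w hw x hx => ?_⟩
    · rw [← upLaplacian_Tcb_core hc hb hf hdiv hx hy, h]; rfl
    · rw [← upLaplacian_Tcb_outer hc hb hf hdiv hw hx, h]; rfl
  · rintro ⟨hcore, houter⟩
    refine eq_of_mem_cochains_Tcb hc hb (upLaplacian_mem_cochains card_of_mem_Tcb hf)
      ((cochains _).smul_mem μ hf) (fun x hx y hy => ?_) fun w hw x hx => ?_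
    · exact (upLaplacian_Tcb_core hc hb hf hdiv hx hy).trans (hcore x hx y hy)
    · exact (upLaplacian_Tcb_outer hc hb hf hdiv hw hx).trans (houter w hw x hx)

end CochainsTcb

section Spectrum

lemma add_card_mul_sum_eq {ι : Type*} {B : Finset ι} {c μ : ℝ} {a : ι → ℝ}
    (h : ∀ w ∈ B, c * a w + ∑ u ∈ B, a u = μ * a w) :
    (c + #B) * ∑ w ∈ B, a w = μ * ∑ w ∈ B, a w := by
  rw [mul_sum, mul_sum, ← sum_congr rfl h, sum_add_distrib, sum_const, nsmul_eq_mul, ← mul_sum,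
    ← mul_sum, add_mul]

variable {c b : ℕ} {μ : ℝ}

lemma eq_or_eq_of_mem_posEigenvalues_Tcb (hc : 2 ≤ c) (hb : 1 ≤ b)
    (hμ : μ ∈ posEigenvalues ((delta1 (Tcb c b))ᵀ * delta1 (Tcb c b))) :
    μ = c + b ∨ μ = c ∧ b ≠ 1 := by
  obtain ⟨hpos, f, hf, hf0, hμf⟩ := (mem_posEigenvalues_iff_exists_cochain card_of_mem_Tcb).mp hμ
  have hdiv (x : ℕ) : ∑ y ∈ Icc 1 (c + b), f x y = 0 :=
    vertsOf_Tcb hc hb ▸ sum_eq_zero_of_upLaplacian_eq_smul hf.1 hpos.ne' hμf x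
  obtain ⟨hcore, houter⟩ := (upLaplacian_Tcb_eq_smul_iff hc hb hf hdiv).mp hμf
  refine or_iff_not_imp_left.mpr fun hne => ?_
  have hcore_zero : ∀ x ∈ Icc 1 c, ∀ y ∈ Icc 1 c, f x y = 0 := fun x hx y hy =>
    (mul_eq_mul_right_iff.mp (hcore x hx y hy)).resolve_left (Ne.symm hne)
  obtain ⟨w, hw, x, hx, hwx⟩ : ∃ w ∈ Icc (c + 1) (c + b), ∃ x ∈ Icc 1 c, f w x ≠ 0 := by
    by_contra! houter_zero
    exact hf0 (eq_of_mem_cochains_Tcb hc hb hf (cochains _).zero_mem hcore_zero houter_zero)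
  have hsum : ∑ u ∈ Icc (c + 1) (c + b), f u x = 0 := by
    have h := add_card_mul_sum_eq (fun u hu => houter u hu x hx)
    rw [Nat.card_Icc, show c + b + 1 - (c + 1) = b by omega] at h
    exact (mul_eq_mul_right_iff.mp h).resolve_left (Ne.symm hne)
  refine ⟨?_, ?_⟩
  · have h := houter w hw x hx
    rw [hsum, add_zero] at h
    exact (mul_right_cancel₀ hwx h).symm
  · rintro rfl
    rw [Icc_self, mem_singleton] at hw
    rw [Icc_self, sum_singleton, ← hw] at hsum
    exact hwx hsum

/-- The exterior product of two functions on `ℕ`. For indicators of vertices `x` and `y` it is the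
cochain of the oriented edge from `x` to `y`. -/
def wedge (p q : ℕ → ℝ) (x y : ℕ) : ℝ :=
  p x * q y - q x * p y

lemma wedge_swap (p q : ℕ → ℝ) (x y : ℕ) : wedge p q y x = -wedge p q x y := by
  unfold wedge
  ring

lemma sum_wedge (s : Finset ℕ) (p q : ℕ → ℝ) (x : ℕ) :
    ∑ y ∈ s, wedge p q x y = p x * ∑ y ∈ s, q y - q x * ∑ y ∈ s, p y := by
  simp only [wedge, sum_sub_distrib, mul_sum]

/-- The flow that sends `a w` units around the triangle `1 → 2 → w → 1` for each `w ∈ s`, for `a`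
vanishing off `s`. It yields the eigenvectors of `𝒯_{c,b}`, with `s` the set of outer vertices. -/
def bookFlow (s : Finset ℕ) (a : ℕ → ℝ) (x y : ℕ) : ℝ :=
  (∑ w ∈ s, a w) * wedge (Pi.single 1 1) (Pi.single 2 1) x y
    + wedge (Pi.single 2 1 - Pi.single 1 1) a x y

lemma sum_bookFlow {s V : Finset ℕ} {a : ℕ → ℝ} (hs : s ⊆ V) (ha : ∀ w ∉ s, a w = 0)
    (h1 : 1 ∈ V) (h2 : 2 ∈ V) (x : ℕ) : ∑ y ∈ V, bookFlow s a x y = 0 := by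
  simp only [bookFlow, sum_add_distrib, ← mul_sum, sum_wedge, Pi.sub_apply, sum_sub_distrib,
    sum_pi_single', h1, h2, if_true, ← sum_subset hs fun w _ hw => ha w hw]
  ring

lemma bookFlow_mem_cochains_Tcb (hc : 2 ≤ c) (hb : 1 ≤ b) {a : ℕ → ℝ}
    (ha : ∀ w ∉ Icc (c + 1) (c + b), a w = 0) :
    bookFlow (Icc (c + 1) (c + b)) a ∈ cochains (Tcb c b) := by
  have hanti (x y : ℕ) : bookFlow (Icc (c + 1) (c + b)) a y x =
      -bookFlow (Icc (c + 1) (c + b)) a x y := by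
    simp only [bookFlow, wedge_swap _ _ x y]
    ring
  have hsingle {i x : ℕ} (h : x ≠ i) : (Pi.single i 1 : ℕ → ℝ) x = 0 := Pi.single_eq_of_ne h 1
  refine (mem_cochains_Tcb_iff hc hb).mpr ⟨hanti, fun x y h => ?_⟩
  simp only [joinGraph_adj, mem_Icc] at h
  obtain rfl | hxy := eq_or_ne x y
  · linarith [hanti x x]
  by_cases hx : x ∈ Icc 1 (c + b)
  · by_cases hy : y ∈ Icc 1 (c + b)
    · rw [mem_Icc] at hx hy
      simp [bookFlow, wedge, hsingle (show x ≠ 1 by omega), hsingle (show x ≠ 2 by omega),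
        hsingle (show y ≠ 1 by omega), hsingle (show y ≠ 2 by omega)]
    · simp [bookFlow, wedge, ha y (by grind), hsingle (show y ≠ 1 by grind),
        hsingle (show y ≠ 2 by grind)]
  · simp [bookFlow, wedge, ha x (by grind), hsingle (show x ≠ 1 by grind),
      hsingle (show x ≠ 2 by grind)]

lemma bookFlow_core {a : ℕ → ℝ} (ha : ∀ w ∉ Icc (c + 1) (c + b), a w = 0) {x y : ℕ}
    (hx : x ∈ Icc 1 c) (hy : y ∈ Icc 1 c) : bookFlow (Icc (c + 1) (c + b)) a x y =
      (∑ w ∈ Icc (c + 1) (c + b), a w) * wedge (Pi.single 1 1) (Pi.single 2 1) x y := by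
  have hcore : ∀ z ∈ Icc 1 c, a z = 0 := fun z hz => ha z (by grind)
  simp only [bookFlow, wedge, hcore x hx, hcore y hy, mul_zero, zero_mul, sub_zero, add_zero]

lemma bookFlow_outer (hc : 2 ≤ c) {a : ℕ → ℝ} (ha : ∀ w ∉ Icc (c + 1) (c + b), a w = 0) {w x : ℕ}
    (hw : w ∈ Icc (c + 1) (c + b)) (hx : x ∈ Icc 1 c) :
    bookFlow (Icc (c + 1) (c + b)) a w x =
      a w * (Pi.single 1 1 - Pi.single 2 1 : ℕ → ℝ) x := by
  have hw1 : w ≠ 1 := by grind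
  have hw2 : w ≠ 2 := by grind
  simp [bookFlow, wedge, ha x (by grind), hw1, hw2, ← mul_neg]

lemma mem_posEigenvalues_Tcb_of_forall (hc : 2 ≤ c) (hb : 1 ≤ b) (hμ : 0 < μ) {a : ℕ → ℝ}
    (ha : ∀ w ∉ Icc (c + 1) (c + b), a w = 0) (ha0 : a ≠ 0)
    (h : ∀ w ∈ Icc (c + 1) (c + b), c * a w + ∑ u ∈ Icc (c + 1) (c + b), a u = μ * a w) :
    μ ∈ posEigenvalues ((delta1 (Tcb c b))ᵀ * delta1 (Tcb c b)) := by
  have hcoch := bookFlow_mem_cochains_Tcb hc hb ha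
  have hdiv := sum_bookFlow (V := Icc 1 (c + b)) (by grind) ha (by grind) (by grind)
  refine (mem_posEigenvalues_iff_exists_cochain card_of_mem_Tcb).mpr ⟨hμ, _, hcoch, ?_,
    (upLaplacian_Tcb_eq_smul_iff hc hb hcoch hdiv).mpr ⟨fun x hx y hy => ?_, fun w hw x hx => ?_⟩⟩
  · obtain ⟨w, hw⟩ := Function.ne_iff.mp ha0
    have hw_mem : w ∈ Icc (c + 1) (c + b) := not_imp_comm.mp (ha w) hw
    have hvalue : bookFlow (Icc (c + 1) (c + b)) a w 1 = a w := by
      simp [bookFlow_outer hc ha hw_mem (show 1 ∈ Icc 1 c by grind)]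
    exact fun h0 => hw (by rw [← hvalue, h0]; rfl)
  · have hsum := add_card_mul_sum_eq h
    rw [Nat.card_Icc, show c + b + 1 - (c + 1) = b by omega] at hsum
    rw [bookFlow_core ha hx hy, ← mul_assoc, hsum, mul_assoc]
  · rw [sum_congr rfl fun u hu => bookFlow_outer hc ha hu hx, bookFlow_outer hc ha hw hx, ← sum_mul]
    linear_combination (Pi.single 1 1 - Pi.single 2 1 : ℕ → ℝ) x * h w hw

lemma natCast_add_mem_posEigenvalues_Tcb (hc : 2 ≤ c) (hb : 1 ≤ b) :
    (c + b : ℝ) ∈ posEigenvalues ((delta1 (Tcb c b))ᵀ * delta1 (Tcb c b)) := by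
  refine mem_posEigenvalues_Tcb_of_forall hc hb (by positivity)
    (a := fun w => if w ∈ Icc (c + 1) (c + b) then 1 else 0) (fun w hw => if_neg hw) ?_ ?_
  · exact Function.ne_iff.mpr ⟨c + 1, by simp [hb]⟩
  · intro w hw
    rw [sum_ite_mem, inter_self, if_pos hw, sum_const, Nat.card_Icc]
    simp

lemma natCast_mem_posEigenvalues_Tcb (hc : 2 ≤ c) (hb : 2 ≤ b) :
    (c : ℝ) ∈ posEigenvalues ((delta1 (Tcb c b))ᵀ * delta1 (Tcb c b)) := by
  refine mem_posEigenvalues_Tcb_of_forall hc (by omega) (by positivity)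
    (a := Pi.single (c + 1) 1 - Pi.single (c + 2) 1) (fun w hw => ?_) ?_ ?_
  · rw [mem_Icc] at hw
    simp [show w ≠ c + 1 by omega, show w ≠ c + 2 by omega]
  · exact Function.ne_iff.mpr ⟨c + 1, by simp⟩
  · intro w _
    simp [sum_pi_single', hb, show 1 ≤ b by omega]

end Spectrum

theorem stmt16_general (c b : ℕ) (hc : 2 ≤ c) (hb : 1 ≤ b) :
    posEigenvalues ((delta1 (Tcb c b))ᵀ * delta1 (Tcb c b)) =
      if b = 1 then {(c : ℝ) + 1} else {(c : ℝ), (c : ℝ) + b} := by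
  ext μ
  split_ifs with h
  · subst h
    rw [Set.mem_singleton_iff]
    constructor
    · intro hμ
      simpa using eq_or_eq_of_mem_posEigenvalues_Tcb hc hb hμ
    · rintro rfl
      simpa using natCast_add_mem_posEigenvalues_Tcb hc hb
  · rw [Set.mem_insert_iff, Set.mem_singleton_iff]
    constructor
    · exact fun hμ => (eq_or_eq_of_mem_posEigenvalues_Tcb hc hb hμ).symm.imp_left And.left
    · rintro (rfl | rfl)
      · exact natCast_mem_posEigenvalues_Tcb hc (by omega)
      · exact natCast_add_mem_posEigenvalues_Tcb hc hb

/-- `λ(𝒯_{c,b}) = c + 1` if `b = 1`, and `λ(𝒯_{c,b}) = c` if `b ≥ 2`. -/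
theorem stmt16 (c b : ℕ) (hc : 3 ≤ c) (hb : 1 ≤ b) :
    (b = 1 → lam (Tcb c b) = (c : ℝ) + 1) ∧ (2 ≤ b → lam (Tcb c b) = (c : ℝ)) := by
  have hlam := congrArg sInf (stmt16_general c b (by omega) hb)
  exact ⟨fun h => hlam.trans (by simp [h]), fun h => hlam.trans (by simp [show b ≠ 1 by omega])⟩
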